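/- arXiv:1312.7614 — 3 statements merged into one kernel-verified Lean document; each statement's English description precedes it below -/
import Mathlib

section
/- Let r > 0 and α ∈ (0,1). For any (possibly randomized) test φ_n : (ℝ^p)^n → [0,1] such that E_μ[φ_n(X_1,…,X_n)] ≤ α for all μ ∈ ℝ^p with max_{1≤j≤p} μ_j ≤ 0, one has inf over all μ with max_{1≤j≤p}(μ_j/σ_j) ≥ r of E_μ[φ_n(X_1,…,X_n)] ≤ α + E[| p⁻¹ Σ_{j=1}^p exp(√n·r·ξ_j − n·r²/2) − 1 |], where ξ_1,…,ξ_p are i.i.d. standard normal random variables. -/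
/-!
Minimax upper bound on power (Lemma 5.1, first part) for testing many moment
inequalities with i.i.d. Gaussian data `X_1, …, X_n ~ N(μ, diag(σ_1², …, σ_p²))`.
The joint law of the sample is the product measure on `Fin n → (Fin p → ℝ)`.
-/

open MeasureTheory ProbabilityTheory
open scoped ENNReal NNReal BigOperators

noncomputable section

namespace ManyMoment

/-- Joint law of `n` i.i.d. `N(μ, diag(σ²))` random vectors in `ℝ^p`. -/
def gaussSample (n p : ℕ) (μ : Fin p → ℝ) (σ : Fin p → ℝ) :
    Measure (Fin n → Fin p → ℝ) :=
  Measure.pi fun _ => Measure.pi fun j => gaussianReal (μ j) (Real.toNNReal ((σ j) ^ 2))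

/-!
Replace the alternative by its `p` one-sparse points `r σ_j e_j`. Under `r σ_j e_j` the sample has
density `exp (r S_j - n r² / 2)` with respect to its law under mean zero, where
`S_j = Σ_i x_{ij} / σ_j`. A minimum is at most an average, so the infimum of the power is at most
`E₀ [L φ]`, with `L` the average of these `p` densities, and `E₀ [L φ] ≤ E₀ φ + E₀ |L - 1|` since
`0 ≤ φ ≤ 1`. Under mean zero, `(S_1, …, S_p)` has the law of `√n (ξ_1, …, ξ_p)`.
-/

section Density

variable {ι : Type*} [Fintype ι] {X : ι → Type*} [∀ i, MeasurableSpace (X i)]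
  (ν : ∀ i, Measure (X i)) [∀ i, IsProbabilityMeasure (ν i)]

lemma setLIntegral_univ_pi_prod {f : ∀ i, X i → ℝ≥0∞} (hf : ∀ i, Measurable (f i))
    {s : ∀ i, Set (X i)} (hs : ∀ i, MeasurableSet (s i)) :
    ∫⁻ x in Set.univ.pi s, ∏ i, f i (x i) ∂Measure.pi ν = ∏ i, ∫⁻ x in s i, f i x ∂ν i := by
  have indicator_eq_prod : (Set.univ.pi s).indicator (fun x ↦ ∏ i, f i (x i)) =
      fun x ↦ ∏ i, (s i).indicator (f i) (x i) := by
    classical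
    ext x
    simp only [Set.indicator_apply, Finset.prod_ite_zero, Set.mem_univ_pi, Finset.mem_univ,
      forall_const]
  have hm i : Measurable ((s i).indicator (f i)) := (hf i).indicator (hs i)
  rw [← lintegral_indicator (MeasurableSet.univ_pi hs), indicator_eq_prod,
    lintegral_prod_eq_prod_lintegral_of_indepFun Finset.univ
      (fun i (x : ∀ i, X i) ↦ (s i).indicator (f i) (x i))
      (iIndepFun_pi fun i ↦ (hm i).aemeasurable) fun i ↦ (hm i).comp (measurable_pi_apply i)]
  refine Finset.prod_congr rfl fun i _ ↦ ?_
  rw [← lintegral_indicator (hs i)]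
  exact (measurePreserving_eval ν i).lintegral_comp (hm i)

lemma pi_withDensity {f : ∀ i, X i → ℝ≥0∞} (hf : ∀ i, Measurable (f i))
    [∀ i, SigmaFinite ((ν i).withDensity (f i))] :
    Measure.pi (fun i ↦ (ν i).withDensity (f i)) =
      (Measure.pi ν).withDensity fun x ↦ ∏ i, f i (x i) := by
  refine Measure.pi_eq fun s hs ↦ ?_
  simp only [withDensity_apply _ (MeasurableSet.univ_pi hs), withDensity_apply _ (hs _),
    setLIntegral_univ_pi_prod ν hf hs]

lemma pi_withDensity_ofReal_exp {g : ∀ i, X i → ℝ} (hg : ∀ i, Measurable (g i)) :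
    Measure.pi (fun i ↦ (ν i).withDensity fun x ↦ ENNReal.ofReal (Real.exp (g i x))) =
      (Measure.pi ν).withDensity fun x ↦ ENNReal.ofReal (Real.exp (∑ i, g i (x i))) := by
  have hexp i : Measurable fun x ↦ Real.exp (g i x) := (hg i).exp
  have (i : ι) : SigmaFinite ((ν i).withDensity fun x ↦ ENNReal.ofReal (Real.exp (g i x))) :=
    SigmaFinite.withDensity_ofReal _
  rw [pi_withDensity ν fun i ↦ (hexp i).ennreal_ofReal]
  simp only [Real.exp_sum, ENNReal.ofReal_prod_of_nonneg fun _ _ ↦ (Real.exp_pos _).le]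

end Density

section AverageDensity

variable {Ω : Type*} [MeasurableSpace Ω] {P : Measure Ω} {L φ : Ω → ℝ}

lemma integrable_of_isFiniteMeasure_withDensity_ofReal (hL : Measurable L) (hL0 : ∀ x, 0 ≤ L x)
    [IsFiniteMeasure (P.withDensity fun x ↦ ENNReal.ofReal (L x))] : Integrable L P := by
  have h := (integrable_withDensity_iff hL.ennreal_ofReal
    (ae_of_all P fun x ↦ ENNReal.ofReal_lt_top)).mp (integrable_const (1 : ℝ))
  simpa only [one_mul, ENNReal.toReal_ofReal (hL0 _)] using h

lemma integral_withDensity_ofReal {E : Type*} [NormedAddCommGroup E] [NormedSpace ℝ E]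
    (hL : Measurable L) (hL0 : ∀ x, 0 ≤ L x) (f : Ω → E) :
    ∫ x, f x ∂(P.withDensity fun x ↦ ENNReal.ofReal (L x)) = ∫ x, L x • f x ∂P := by
  rw [integral_withDensity_eq_integral_toReal_smul hL.ennreal_ofReal
    (ae_of_all _ fun x ↦ ENNReal.ofReal_lt_top)]
  simp only [ENNReal.toReal_ofReal (hL0 _)]

lemma integrable_mul_of_mem_Icc (hL : Integrable L P) (hφ : Measurable φ)
    (hφ01 : ∀ x, φ x ∈ Set.Icc 0 1) : Integrable (fun x ↦ L x * φ x) P :=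
  hL.mul_bdd (c := 1) hφ.aestronglyMeasurable <| ae_of_all _ fun x ↦ by
    simpa only [Real.norm_of_nonneg (hφ01 x).1] using (hφ01 x).2

lemma integral_mul_le_integral_add_integral_abs_sub_one [IsFiniteMeasure P]
    (hL : Integrable L P) (hφ : Measurable φ) (hφ01 : ∀ x, φ x ∈ Set.Icc 0 1) :
    ∫ x, L x * φ x ∂P ≤ ∫ x, φ x ∂P + ∫ x, |L x - 1| ∂P := by
  have hφ_int : Integrable φ P := .of_mem_Icc 0 1 hφ.aemeasurable (ae_of_all _ hφ01)
  have hdiff_int : Integrable (fun x ↦ |L x - 1|) P := (hL.sub (integrable_const 1)).abs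
  rw [← integral_add hφ_int hdiff_int]
  refine integral_mono (integrable_mul_of_mem_Icc hL hφ hφ01) (hφ_int.add hdiff_int) fun x ↦ ?_
  calc L x * φ x = φ x + (L x - 1) * φ x := by ring
    _ ≤ φ x + |L x - 1| * φ x := by gcongr; exacts [(hφ01 x).1, le_abs_self _]
    _ ≤ φ x + |L x - 1| := by gcongr; exact mul_le_of_le_one_right (abs_nonneg _) (hφ01 x).2

variable {ι : Type*} [Fintype ι] [Nonempty ι]

lemma exists_le_inv_card_mul_sum (a : ι → ℝ) :
    ∃ j, a j ≤ (Fintype.card ι : ℝ)⁻¹ * ∑ k, a k := by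
  obtain ⟨j, hj⟩ := Finite.exists_min a
  refine ⟨j, (le_inv_mul_iff₀ (by positivity)).2 ?_⟩
  simpa only [nsmul_eq_mul, Finset.card_univ] using
    Finset.card_nsmul_le_sum Finset.univ a (a j) fun k _ ↦ hj k

theorem exists_integral_le_integral_add_integral_abs_average_sub_one [IsFiniteMeasure P]
    {Q : ι → Measure Ω} [∀ j, IsFiniteMeasure (Q j)] {L : ι → Ω → ℝ}
    (hL : ∀ j, Measurable (L j)) (hL0 : ∀ j x, 0 ≤ L j x)
    (hQ : ∀ j, Q j = P.withDensity fun x ↦ ENNReal.ofReal (L j x))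
    (hφ : Measurable φ) (hφ01 : ∀ x, φ x ∈ Set.Icc 0 1) :
    ∃ j, ∫ x, φ x ∂Q j ≤
      ∫ x, φ x ∂P + ∫ x, |(Fintype.card ι : ℝ)⁻¹ * ∑ j, L j x - 1| ∂P := by
  have hL_int j : Integrable (L j) P := by
    have : IsFiniteMeasure (P.withDensity fun x ↦ ENNReal.ofReal (L j x)) := hQ j ▸ inferInstance
    exact integrable_of_isFiniteMeasure_withDensity_ofReal (hL j) (hL0 j)
  obtain ⟨j, hj⟩ := exists_le_inv_card_mul_sum fun j ↦ ∫ x, φ x ∂Q j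
  refine ⟨j, hj.trans ?_⟩
  calc (Fintype.card ι : ℝ)⁻¹ * ∑ k, ∫ x, φ x ∂Q k
      = (Fintype.card ι : ℝ)⁻¹ * ∑ k, ∫ x, L k x * φ x ∂P := by
        simp only [hQ, integral_withDensity_ofReal (hL _) (hL0 _), smul_eq_mul]
    _ = ∫ x, ((Fintype.card ι : ℝ)⁻¹ * ∑ k, L k x) * φ x ∂P := by
        rw [← integral_finsetSum _ fun k _ ↦ integrable_mul_of_mem_Icc (hL_int k) hφ hφ01,
          ← integral_const_mul]
        simp only [mul_assoc, Finset.sum_mul]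
    _ ≤ _ := integral_mul_le_integral_add_integral_abs_sub_one
        ((integrable_finsetSum _ fun k _ ↦ hL_int k).const_mul _) hφ hφ01

end AverageDensity

section Gaussian

-- The shift is written `v * t` so that the formula also covers the Dirac case `v = 0`.
lemma gaussianReal_add_mul_eq_withDensity (m t : ℝ) (v : ℝ≥0) :
    gaussianReal (m + v * t) v = (gaussianReal m v).withDensity fun x ↦
      ENNReal.ofReal (Real.exp (t * (x - m) - v * t ^ 2 / 2)) := by
  rcases eq_or_ne v 0 with rfl | hv
  · simp [gaussianReal_zero_var, dirac_withDensity]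
  · rw [gaussianReal_of_var_ne_zero _ hv, gaussianReal_of_var_ne_zero _ hv,
      ← withDensity_mul _ (measurable_gaussianPDF m v) (by fun_prop)]
    congr 1 with x
    rw [Pi.mul_apply, gaussianPDF, gaussianPDF,
      ← ENNReal.ofReal_mul (gaussianPDFReal_nonneg _ _ _), gaussianPDFReal, gaussianPDFReal,
      mul_assoc _ (Real.exp _), ← Real.exp_add]
    congr 3
    field_simp
    ring

lemma charFunDual_gaussianReal (m : ℝ) (v : ℝ≥0) (L : StrongDual ℝ ℝ) :
    charFunDual (gaussianReal m v) L = Complex.exp (L m * Complex.I - v * L 1 ^ 2 / 2) := by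
  rw [charFunDual_eq_charFun_map_one, gaussianReal_map_continuousLinearMap, charFun_gaussianReal]
  simp only [NNReal.coe_mul, Real.coe_toNNReal _ (sq_nonneg _), Complex.ofReal_one]
  push_cast
  ring_nf

lemma map_sum_pi_pi_gaussianReal {ι κ : Type*} [Fintype ι] [Fintype κ]
    (m : ι → κ → ℝ) (v : ι → κ → ℝ≥0) :
    (Measure.pi fun i ↦ Measure.pi fun j ↦ gaussianReal (m i j) (v i j)).map
        (fun x ↦ ∑ i, x i) =
      Measure.pi fun j ↦ gaussianReal (∑ i, m i j) (∑ i, v i j) := by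
  classical
  refine Measure.ext_of_charFunDual ?_
  ext L
  rw [charFunDual_map_sum_pi_eq_prod, Finset.prod_apply, charFunDual_pi]
  simp only [charFunDual_pi, charFunDual_gaussianReal]
  rw [Finset.prod_comm]
  refine Finset.prod_congr rfl fun j _ ↦ ?_
  simp only [← Complex.exp_sum, Finset.sum_sub_distrib, map_sum, NNReal.coe_sum,
    Complex.ofReal_sum, Finset.sum_mul, Finset.sum_div]

lemma map_sqrt_mul_pi_gaussianReal {ι : Type*} [Fintype ι] (v : ℝ≥0) :
    (Measure.pi fun _ : ι ↦ gaussianReal 0 1).map (fun ξ i ↦ √v * ξ i) =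
      Measure.pi fun _ ↦ gaussianReal 0 v := by
  rw [Measure.pi_map_pi (f := fun _ x ↦ √v * x) (by fun_prop)]
  congr! 2 with i
  rw [gaussianReal_map_const_mul, mul_zero]
  congr 1
  ext
  simp

end Gaussian

instance isProbabilityMeasure_gaussSample (n p : ℕ) (μ σ : Fin p → ℝ) :
    IsProbabilityMeasure (gaussSample n p μ σ) := by
  unfold gaussSample
  infer_instance

variable {n p : ℕ}

lemma gaussSample_add_mul_eq_withDensity (μ σ t : Fin p → ℝ) :
    gaussSample n p (fun j ↦ μ j + σ j ^ 2 * t j) σ =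
      (gaussSample n p μ σ).withDensity fun x ↦ ENNReal.ofReal
        (Real.exp (∑ i, ∑ j, (t j * (x i j - μ j) - σ j ^ 2 * t j ^ 2 / 2))) := by
  have hcoord j := gaussianReal_add_mul_eq_withDensity (μ j) (t j) (σ j ^ 2).toNNReal
  simp only [Real.coe_toNNReal _ (sq_nonneg _)] at hcoord
  simp only [gaussSample, hcoord]
  rw [pi_withDensity_ofReal_exp (ι := Fin p) _ (by fun_prop),
    pi_withDensity_ofReal_exp (ι := Fin n) _ (by fun_prop)]

/-- The statistics `S_j = (Σ_i x_{ij}) / σ_j`. They are not divided by `√n`, so that their law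
under mean zero, `N(0, n)`, needs no case distinction at `n = 0`. -/
def standardizedSum (σ : Fin p → ℝ) (x : Fin n → Fin p → ℝ) (j : Fin p) : ℝ :=
  (∑ i, x i) j / σ j

@[fun_prop]
lemma measurable_standardizedSum (σ : Fin p → ℝ) :
    Measurable (standardizedSum (n := n) σ) := by
  unfold standardizedSum
  fun_prop

lemma gaussSample_single_eq_withDensity {σ : Fin p → ℝ} {j : Fin p} (hj : σ j ≠ 0) (r : ℝ) :
    gaussSample n p (Pi.single j (r * σ j)) σ = (gaussSample n p 0 σ).withDensity fun x ↦
      ENNReal.ofReal (Real.exp (r * standardizedSum σ x j - n * r ^ 2 / 2)) := by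
  have hmean : Pi.single j (r * σ j) =
      fun k ↦ (0 : Fin p → ℝ) k + σ k ^ 2 * (Pi.single j (r / σ j) : Fin p → ℝ) k := by
    ext k
    obtain rfl | hk := eq_or_ne k j
    · simp only [Pi.single_eq_same, Pi.zero_apply, zero_add]
      field_simp
    · simp [hk]
  rw [hmean, gaussSample_add_mul_eq_withDensity]
  congr! 4 with x
  have hrow i : ∑ k, ((Pi.single j (r / σ j) : Fin p → ℝ) k * (x i k - (0 : Fin p → ℝ) k) -
      σ k ^ 2 * (Pi.single j (r / σ j) : Fin p → ℝ) k ^ 2 / 2) =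
      r / σ j * x i j - r ^ 2 / 2 := by
    rw [Fintype.sum_eq_single j fun k hk ↦ by simp [hk]]
    simp only [Pi.single_eq_same, Pi.zero_apply, sub_zero]
    field_simp
  simp only [hrow, Finset.sum_sub_distrib, ← Finset.mul_sum, standardizedSum, Finset.sum_apply,
    Finset.sum_const, Finset.card_univ, Fintype.card_fin, nsmul_eq_mul]
  ring

lemma map_standardizedSum_gaussSample_zero {σ : Fin p → ℝ} (hσ : ∀ j, σ j ≠ 0) :
    (gaussSample n p 0 σ).map (standardizedSum σ) =
      Measure.pi fun _ ↦ gaussianReal 0 n := by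
  have hsum : (gaussSample n p 0 σ).map (fun x ↦ ∑ i, x i) =
      Measure.pi fun j ↦ gaussianReal 0 (n * (σ j ^ 2).toNNReal) := by
    simp only [gaussSample, map_sum_pi_pi_gaussianReal, Pi.zero_apply, Finset.sum_const,
      Finset.card_univ, Fintype.card_fin, nsmul_eq_mul, mul_zero]
  have hcomp : standardizedSum σ = (fun (s : Fin p → ℝ) j ↦ s j / σ j) ∘
      fun x : Fin n → Fin p → ℝ ↦ ∑ i, x i := rfl
  rw [hcomp, ← Measure.map_map (by fun_prop) (by fun_prop), hsum,
    Measure.pi_map_pi (f := fun j s ↦ s / σ j) (by fun_prop)]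
  congr! 2 with j
  rw [gaussianReal_map_div_const, zero_div]
  congr 1
  ext
  have hσ2 : (σ j) ^ 2 ≠ 0 := pow_ne_zero 2 (hσ j)
  rw [NNReal.coe_div, NNReal.coe_mul, Real.coe_toNNReal _ (sq_nonneg _), NNReal.coe_mk]
  exact mul_div_cancel_right₀ _ hσ2

lemma integral_comp_standardizedSum {σ : Fin p → ℝ} (hσ : ∀ j, σ j ≠ 0) {f : (Fin p → ℝ) → ℝ}
    (hf : Measurable f) :
    ∫ x, f (standardizedSum σ x) ∂gaussSample n p 0 σ =
      ∫ ξ, f (fun j ↦ √n * ξ j) ∂Measure.pi fun _ : Fin p ↦ gaussianReal 0 1 := by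
  have hscale : Measurable fun (ξ : Fin p → ℝ) j ↦ √n * ξ j := by fun_prop
  rw [← integral_map (by fun_prop) hf.aestronglyMeasurable,
    map_standardizedSum_gaussSample_zero hσ, ← map_sqrt_mul_pi_gaussianReal, NNReal.coe_natCast,
    integral_map hscale.aemeasurable hf.aestronglyMeasurable]

theorem exists_integral_gaussSample_single_le [NeZero p] {σ : Fin p → ℝ} (hσ : ∀ j, σ j ≠ 0)
    (r : ℝ) {φ : (Fin n → Fin p → ℝ) → ℝ} (hφ : Measurable φ) (hφ01 : ∀ x, φ x ∈ Set.Icc 0 1) :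
    ∃ j, ∫ x, φ x ∂gaussSample n p (Pi.single j (r * σ j)) σ ≤ ∫ x, φ x ∂gaussSample n p 0 σ +
      ∫ ξ, |(p : ℝ)⁻¹ * ∑ j, Real.exp (√n * r * ξ j - n * r ^ 2 / 2) - 1|
        ∂Measure.pi fun _ : Fin p ↦ gaussianReal 0 1 := by
  obtain ⟨j, hj⟩ := exists_integral_le_integral_add_integral_abs_average_sub_one
    (L := fun j x ↦ Real.exp (r * standardizedSum σ x j - n * r ^ 2 / 2))
    (fun j ↦ by fun_prop) (fun j x ↦ (Real.exp_pos _).le)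
    (fun j ↦ gaussSample_single_eq_withDensity (hσ j) r) hφ hφ01
  refine ⟨j, hj.trans_eq ?_⟩
  rw [Fintype.card_fin, integral_comp_standardizedSum hσ
    (f := fun s ↦ |(p : ℝ)⁻¹ * ∑ j, Real.exp (r * s j - n * r ^ 2 / 2) - 1|) (by fun_prop)]
  simp only [mul_left_comm r, mul_assoc]

lemma le_iSup_single_mul_div {σ : Fin p → ℝ} (r : ℝ) {j : Fin p} (hj : σ j ≠ 0) :
    r ≤ ⨆ k, (Pi.single j (r * σ j) : Fin p → ℝ) k / σ k :=
  le_ciSup_of_le (Set.finite_range _).bddAbove j <| by simp [hj]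

theorem statement7_general (hp : 1 ≤ p) {σ : Fin p → ℝ} (hσ : ∀ j, σ j ≠ 0) (r : ℝ)
    {φ : (Fin n → Fin p → ℝ) → ℝ} (hφ : Measurable φ) (hφ0 : ∀ x, 0 ≤ φ x)
    (hφ1 : ∀ x, φ x ≤ 1) :
    sInf {v : ℝ | ∃ μ : Fin p → ℝ,
        r ≤ (⨆ j, μ j / σ j) ∧ v = ∫ x, φ x ∂(gaussSample n p μ σ)} ≤
      ∫ x, φ x ∂(gaussSample n p 0 σ) +
        ∫ ξ, |(p : ℝ)⁻¹ * ∑ j, Real.exp (√n * r * ξ j - n * r ^ 2 / 2) - 1|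
          ∂(Measure.pi fun _ : Fin p ↦ gaussianReal 0 1) := by
  have : NeZero p := .of_pos hp
  obtain ⟨j, hj⟩ := exists_integral_gaussSample_single_le hσ r hφ fun x ↦ ⟨hφ0 x, hφ1 x⟩
  refine le_trans (csInf_le ?_ ⟨_, le_iSup_single_mul_div r (hσ j), rfl⟩) hj
  exact ⟨0, by rintro _ ⟨μ, -, rfl⟩; exact integral_nonneg hφ0⟩

/-- Lemma 5.1, upper bound on power: if a (possibly randomized) test
`φ : (ℝ^p)^n → [0,1]` has level `α` over all `μ` with `max_j μ_j ≤ 0`, then its infimum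
power over alternatives `max_j (μ_j/σ_j) ≥ r` is at most
`α + E|p⁻¹ Σ_j exp(√n r ξ_j - n r²/2) - 1|`, `ξ_1,…,ξ_p` i.i.d. standard normal. -/
theorem statement7 :
    ∀ (n p : ℕ), 1 ≤ n → 1 ≤ p →
    ∀ σ : Fin p → ℝ, (∀ j, 0 < σ j) →
    ∀ r α : ℝ, 0 < r → 0 < α → α < 1 →
    ∀ φ : (Fin n → Fin p → ℝ) → ℝ,
    Measurable φ → (∀ x, 0 ≤ φ x) → (∀ x, φ x ≤ 1) →
    (∀ μ : Fin p → ℝ, (∀ j, μ j ≤ 0) → ∫ x, φ x ∂(gaussSample n p μ σ) ≤ α) →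
    sInf {v : ℝ | ∃ μ : Fin p → ℝ,
        r ≤ (⨆ j, μ j / σ j) ∧ v = ∫ x, φ x ∂(gaussSample n p μ σ)} ≤
      α + ∫ ξ, |(p : ℝ)⁻¹ * ∑ j, Real.exp (Real.sqrt n * r * ξ j - n * r ^ 2 / 2) - 1|
            ∂(Measure.pi fun _ : Fin p => gaussianReal 0 1) := by
  intro n p _ hp σ hσ r α _ _ _ φ hφ hφ0 hφ1 hlevel
  exact (statement7_general hp (fun j ↦ (hσ j).ne') r hφ hφ0 hφ1).trans
    (add_le_add_left (hlevel 0 fun _ ↦ le_rfl) _)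

end ManyMoment
end
end

section
/- Let p_n → ∞ as n → ∞, and let ε_n > 0 be any sequence with ε_n → 0 and ε_n·√(log p_n) → ∞. Set r̲_n := (1 − ε_n)·√(2·(log p_n)/n). Then E[| p_n⁻¹ Σ_{j=1}^{p_n} exp(√n·r̲_n·ξ_j − n·r̲_n²/2) − 1 |] → 0 as n → ∞, where ξ_1,…,ξ_{p_n} are i.i.d. standard normal random variables. -/
/-!
Minimax lower bound, asymptotic part (Lemma 5.1, second part): the likelihood-ratio
distance term vanishes at the detection boundary `r̲_n = (1-ε_n)√(2 log p_n / n)`.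
-/

open MeasureTheory ProbabilityTheory Filter
open scoped ENNReal NNReal BigOperators

noncomputable section

namespace ManyMoment

/-!
For `n ≥ 1` the summands are `L_a (ξ_j)`, where `L_a` is the likelihood ratio of `N(a, 1)` against
`N(0, 1)`, `a = (1 - ε_n) t` and `t = √(2 log p_n)`. They have mean `1`, but their second moment
`exp (a²)` may exceed `p_n = exp (t² / 2)`, so the variance of the average need not be small.
Instead `L_a` is truncated at the level `L_a t`.

* The kept part has second moment at most `(L_a t) E[L_a] = exp (a t - a² / 2)`, so averaging `p_n`
  copies leaves a standard deviation of at most `exp (-(t - a)² / 4)`.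
* The discarded part lives on `x > t`, where `L_a ≤ exp (-(t - a)² / 2) L_t`; as `E[L_t] = 1`, its
  mean is at most `exp (-(t - a)² / 2)`.

Both bounds vanish since `t - a = ε_n √(2 log p_n) → ∞`.
-/

section SampleMean

variable {ι Ω : Type*} [Fintype ι]

/-- The empirical mean of `f` over a finite sample `ξ`; it is `0` for an empty sample. -/
def sampleMean (f : Ω → ℝ) (ξ : ι → Ω) : ℝ :=
  (Fintype.card ι : ℝ)⁻¹ * ∑ j, f (ξ j)

lemma sampleMean_add (f g : Ω → ℝ) (ξ : ι → Ω) :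
    sampleMean (f + g) ξ = sampleMean f ξ + sampleMean g ξ := by
  simp only [sampleMean, Pi.add_apply, Finset.sum_add_distrib, mul_add]

lemma abs_sampleMean_le (f : Ω → ℝ) (ξ : ι → Ω) :
    |sampleMean f ξ| ≤ sampleMean (fun ω => |f ω|) ξ := by
  rw [sampleMean, abs_mul, abs_of_nonneg (by positivity)]
  exact mul_le_mul_of_nonneg_left (Finset.abs_sum_le_sum_abs _ _) (by positivity)

variable [MeasurableSpace Ω] {μ : Measure Ω} {f : Ω → ℝ}

lemma integral_sq_le_mul_integral_abs (hf : Integrable f μ) {K : ℝ} (hfK : ∀ ω, |f ω| ≤ K) :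
    ∫ ω, f ω ^ 2 ∂μ ≤ K * ∫ ω, |f ω| ∂μ := by
  rw [← integral_const_mul]
  refine integral_mono_of_nonneg (ae_of_all _ fun ω => sq_nonneg _) (hf.abs.const_mul K)
    (ae_of_all _ fun ω => ?_)
  calc f ω ^ 2 = |f ω| * |f ω| := by rw [← sq_abs, sq]
    _ ≤ K * |f ω| := mul_le_mul_of_nonneg_right (hfK ω) (abs_nonneg _)

variable [IsProbabilityMeasure μ]

lemma memLp_sampleMean {r : ℝ≥0∞} (hf : MemLp f r μ) :
    MemLp (sampleMean f) r (Measure.pi fun _ : ι => μ) :=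
  (memLp_finsetSum _ fun j _ =>
    hf.comp_measurePreserving (measurePreserving_eval (fun _ : ι => μ) j)).const_mul _

lemma integrable_sampleMean (hf : Integrable f μ) :
    Integrable (sampleMean f) (Measure.pi fun _ : ι => μ) :=
  memLp_one_iff_integrable.1 (memLp_sampleMean (memLp_one_iff_integrable.2 hf))

lemma integral_sampleMean [Nonempty ι] (hf : Integrable f μ) :
    ∫ ξ, sampleMean f ξ ∂(Measure.pi fun _ : ι => μ) = ∫ ω, f ω ∂μ := by
  have integral_coord (j : ι) :
      ∫ ξ, f (ξ j) ∂(Measure.pi fun _ : ι => μ) = ∫ ω, f ω ∂μ :=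
    integral_comp_eval (μ := fun _ : ι => μ) hf.aestronglyMeasurable
  have integrable_coord (j : ι) :
      Integrable (fun ξ : ι → Ω => f (ξ j)) (Measure.pi fun _ : ι => μ) :=
    (measurePreserving_eval (fun _ : ι => μ) j).integrable_comp_of_integrable hf
  simp only [sampleMean]
  rw [integral_const_mul, integral_finsetSum _ fun j _ => integrable_coord j]
  simp [integral_coord]

lemma variance_sampleMean (hf : MemLp f 2 μ) :
    Var[sampleMean f; Measure.pi fun _ : ι => μ] = (Fintype.card ι : ℝ)⁻¹ * Var[f; μ] := by
  have variance_sum := variance_sum_pi (μ := fun _ : ι => μ) (X := fun _ => f) fun _ => hf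
  rw [Finset.sum_const, Finset.card_univ, nsmul_eq_mul] at variance_sum
  have sampleMean_eq : sampleMean f =
      fun ξ : ι → Ω => (Fintype.card ι : ℝ)⁻¹ * (∑ j, fun ξ : ι → Ω => f (ξ j)) ξ := by
    ext ξ
    simp only [sampleMean, Finset.sum_apply]
  rw [sampleMean_eq, variance_const_mul, variance_sum]
  field_simp

lemma integral_abs_sub_integral_le_sqrt_variance (hf : MemLp f 2 μ) :
    ∫ ω, |f ω - ∫ ω', f ω' ∂μ| ∂μ ≤ √(Var[f; μ]) := by
  have abs_dev_memLp : MemLp (fun ω => |f ω - ∫ ω', f ω' ∂μ|) 2 μ :=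
    (hf.sub (memLp_const _)).abs
  have variance_abs_dev := variance_eq_sub abs_dev_memLp
  simp only [Pi.pow_apply, sq_abs] at variance_abs_dev
  apply Real.le_sqrt_of_sq_le
  rw [variance_eq_integral hf.aestronglyMeasurable.aemeasurable]
  linarith [variance_nonneg (fun ω => |f ω - ∫ ω', f ω' ∂μ|) μ]

lemma integral_abs_sampleMean_sub_integral_le_sqrt [Nonempty ι] (hf : MemLp f 2 μ) :
    ∫ ξ, |sampleMean f ξ - ∫ ω, f ω ∂μ| ∂(Measure.pi fun _ : ι => μ)
      ≤ √((Fintype.card ι : ℝ)⁻¹ * ∫ ω, f ω ^ 2 ∂μ) := by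
  have mean_abs_dev := integral_abs_sub_integral_le_sqrt_variance (memLp_sampleMean (ι := ι) hf)
  rw [integral_sampleMean (hf.integrable one_le_two), variance_sampleMean hf] at mean_abs_dev
  refine mean_abs_dev.trans (Real.sqrt_le_sqrt ?_)
  gcongr
  exact variance_le_expectation_sq hf.aestronglyMeasurable

lemma integral_abs_sampleMean_sub_integral_le_two_mul [Nonempty ι] (hf : Integrable f μ) :
    ∫ ξ, |sampleMean f ξ - ∫ ω, f ω ∂μ| ∂(Measure.pi fun _ : ι => μ)
      ≤ 2 * ∫ ω, |f ω| ∂μ := by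
  have abs_mean_int : Integrable (sampleMean fun ω => |f ω|) (Measure.pi fun _ : ι => μ) :=
    integrable_sampleMean hf.abs
  calc ∫ ξ, |sampleMean f ξ - ∫ ω, f ω ∂μ| ∂(Measure.pi fun _ : ι => μ)
      ≤ ∫ ξ, (sampleMean (fun ω => |f ω|) ξ + ∫ ω, |f ω| ∂μ) ∂(Measure.pi fun _ : ι => μ) :=
        integral_mono ((integrable_sampleMean hf).sub (integrable_const _)).abs
          (abs_mean_int.add (integrable_const _)) fun ξ =>
            (abs_sub _ _).trans (add_le_add (abs_sampleMean_le f ξ) (abs_integral_le_integral_abs))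
    _ = 2 * ∫ ω, |f ω| ∂μ := by
        rw [integral_add abs_mean_int (integrable_const _), integral_sampleMean hf.abs,
          integral_const, probReal_univ, one_smul, two_mul]

lemma integral_abs_sampleMean_sub_integral_add_le {g h : Ω → ℝ} (hg : Integrable g μ)
    (hh : Integrable h μ) :
    ∫ ξ, |sampleMean (g + h) ξ - ∫ ω, (g + h) ω ∂μ| ∂(Measure.pi fun _ : ι => μ)
      ≤ ∫ ξ, |sampleMean g ξ - ∫ ω, g ω ∂μ| ∂(Measure.pi fun _ : ι => μ)
        + ∫ ξ, |sampleMean h ξ - ∫ ω, h ω ∂μ| ∂(Measure.pi fun _ : ι => μ) := by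
  have abs_dev_int {k : Ω → ℝ} (hk : Integrable k μ) :
      Integrable (fun ξ => |sampleMean k ξ - ∫ ω, k ω ∂μ|) (Measure.pi fun _ : ι => μ) :=
    ((integrable_sampleMean hk).sub (integrable_const _)).abs
  rw [← integral_add (abs_dev_int hg) (abs_dev_int hh), integral_add' hg hh]
  refine integral_mono ?_ ((abs_dev_int hg).add (abs_dev_int hh)) fun ξ => ?_
  · simpa only [integral_add' hg hh] using abs_dev_int (hg.add hh)
  · simp only [sampleMean_add, add_sub_add_comm]
    exact abs_add_le _ _

lemma integral_abs_sampleMean_sub_integral_le_truncation [Nonempty ι] (hfm : Measurable f)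
    (hf : Integrable f μ) {K : ℝ} (hK : 0 ≤ K) :
    ∫ ξ, |sampleMean f ξ - ∫ ω, f ω ∂μ| ∂(Measure.pi fun _ : ι => μ)
      ≤ √((Fintype.card ι : ℝ)⁻¹ * (K * ∫ ω, |f ω| ∂μ)) + 2 * ∫ ω in {ω | K < |f ω|}, |f ω| ∂μ := by
  set s := {ω | K < |f ω|}
  have s_meas : MeasurableSet s := measurableSet_lt measurable_const hfm.abs
  have kept_add_tail : sᶜ.indicator f + s.indicator f = f := Set.indicator_compl_add_self s f
  have kept_int : Integrable (sᶜ.indicator f) μ := hf.indicator s_meas.compl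
  have kept_le (ω : Ω) : |sᶜ.indicator f ω| ≤ K := by
    by_cases hω : ω ∈ s
    · simpa [hω] using hK
    · simpa [hω] using not_lt.1 hω
  have kept_memLp : MemLp (sᶜ.indicator f) 2 μ :=
    MemLp.of_bound kept_int.aestronglyMeasurable K (ae_of_all _ kept_le)
  have kept_sq : ∫ ω, sᶜ.indicator f ω ^ 2 ∂μ ≤ K * ∫ ω, |f ω| ∂μ := by
    refine (integral_sq_le_mul_integral_abs kept_int kept_le).trans ?_
    gcongr K * ?_
    exact integral_mono kept_int.abs hf.abs fun ω => norm_indicator_le_norm_self f ω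
  have tail_abs : ∫ ω, |s.indicator f ω| ∂μ = ∫ ω in s, |f ω| ∂μ := by
    simp_rw [← integral_indicator s_meas, ← Real.norm_eq_abs, norm_indicator_eq_indicator_norm]
  have split := integral_abs_sampleMean_sub_integral_add_le (ι := ι) kept_int
    (hf.indicator s_meas)
  rw [kept_add_tail] at split
  refine split.trans (add_le_add ?_ ?_)
  · refine (integral_abs_sampleMean_sub_integral_le_sqrt kept_memLp).trans (Real.sqrt_le_sqrt ?_)
    gcongr
  · exact tail_abs ▸ integral_abs_sampleMean_sub_integral_le_two_mul (hf.indicator s_meas)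

end SampleMean

section GaussianLikelihoodRatio

/-- The likelihood ratio of `N(a, 1)` with respect to `N(0, 1)`. -/
def gaussianLikelihoodRatio (a x : ℝ) : ℝ :=
  Real.exp (a * x - a ^ 2 / 2)

lemma gaussianLikelihoodRatio_pos (a x : ℝ) : 0 < gaussianLikelihoodRatio a x :=
  Real.exp_pos _

lemma measurable_gaussianLikelihoodRatio (a : ℝ) : Measurable (gaussianLikelihoodRatio a) := by
  unfold gaussianLikelihoodRatio
  fun_prop

lemma integrable_gaussianLikelihoodRatio (a : ℝ) :
    Integrable (gaussianLikelihoodRatio a) (gaussianReal 0 1) := by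
  unfold gaussianLikelihoodRatio
  simp_rw [Real.exp_sub]
  exact (integrable_exp_mul_gaussianReal a).div_const _

lemma integral_gaussianLikelihoodRatio (a : ℝ) :
    ∫ x, gaussianLikelihoodRatio a x ∂(gaussianReal 0 1) = 1 := by
  have mgf_eq : ∫ x, Real.exp (a * x) ∂(gaussianReal 0 1) = Real.exp (a ^ 2 / 2) := by
    simpa [mgf] using congrFun (mgf_id_gaussianReal (μ := 0) (v := 1)) a
  simp_rw [gaussianLikelihoodRatio, Real.exp_sub]
  rw [integral_div, mgf_eq, div_self (Real.exp_ne_zero _)]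

lemma gaussianLikelihoodRatio_le_exp_mul {a t x : ℝ} (hat : a ≤ t) (hx : t ≤ x) :
    gaussianLikelihoodRatio a x
      ≤ Real.exp (-(t - a) ^ 2 / 2) * gaussianLikelihoodRatio t x := by
  rw [gaussianLikelihoodRatio, gaussianLikelihoodRatio, ← Real.exp_add, Real.exp_le_exp]
  linarith [mul_nonneg (sub_nonneg.2 hat) (sub_nonneg.2 hx)]

lemma setIntegral_gaussianLikelihoodRatio_le {a t : ℝ} {s : Set ℝ} (hat : a ≤ t)
    (hsm : MeasurableSet s) (hs : s ⊆ Set.Ici t) :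
    ∫ x in s, gaussianLikelihoodRatio a x ∂(gaussianReal 0 1) ≤ Real.exp (-(t - a) ^ 2 / 2) := by
  set c := Real.exp (-(t - a) ^ 2 / 2)
  have dominating_int : Integrable (fun x => c * gaussianLikelihoodRatio t x) (gaussianReal 0 1) :=
    (integrable_gaussianLikelihoodRatio t).const_mul c
  calc ∫ x in s, gaussianLikelihoodRatio a x ∂(gaussianReal 0 1)
      ≤ ∫ x in s, c * gaussianLikelihoodRatio t x ∂(gaussianReal 0 1) :=
        setIntegral_mono_on (integrable_gaussianLikelihoodRatio a).integrableOn
          dominating_int.integrableOn hsm fun x hx => gaussianLikelihoodRatio_le_exp_mul hat (hs hx)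
    _ ≤ ∫ x, c * gaussianLikelihoodRatio t x ∂(gaussianReal 0 1) :=
        setIntegral_le_integral dominating_int <| ae_of_all _ fun x =>
          mul_nonneg (Real.exp_pos _).le (gaussianLikelihoodRatio_pos t x).le
    _ = c := by rw [integral_const_mul, integral_gaussianLikelihoodRatio, mul_one]

lemma integral_abs_sampleMean_gaussianLikelihoodRatio_sub_one_le {ι : Type*} [Fintype ι] {a t : ℝ}
    (ha : 0 ≤ a) (hat : a ≤ t) (hι : Real.exp (t ^ 2 / 2) ≤ Fintype.card ι) :
    ∫ ξ, |sampleMean (gaussianLikelihoodRatio a) ξ - 1|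
        ∂(Measure.pi fun _ : ι => gaussianReal 0 1)
      ≤ 3 * Real.exp (-(t - a) ^ 2 / 4) := by
  have : Nonempty ι := by
    rw [← Fintype.card_pos_iff, ← Nat.cast_pos (α := ℝ)]
    exact (Real.exp_pos _).trans_le hι
  have abs_eq (x : ℝ) : |gaussianLikelihoodRatio a x| = gaussianLikelihoodRatio a x :=
    abs_of_pos (gaussianLikelihoodRatio_pos a x)
  have truncated := integral_abs_sampleMean_sub_integral_le_truncation (ι := ι)
    (measurable_gaussianLikelihoodRatio a) (integrable_gaussianLikelihoodRatio a)
    (gaussianLikelihoodRatio_pos a t).le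
  simp only [abs_eq, integral_gaussianLikelihoodRatio, mul_one] at truncated
  have kept_le : √((Fintype.card ι : ℝ)⁻¹ * gaussianLikelihoodRatio a t)
      ≤ Real.exp (-(t - a) ^ 2 / 4) := by
    refine Real.sqrt_le_iff.2 ⟨(Real.exp_pos _).le, ?_⟩
    calc (Fintype.card ι : ℝ)⁻¹ * gaussianLikelihoodRatio a t
        ≤ (Real.exp (t ^ 2 / 2))⁻¹ * gaussianLikelihoodRatio a t := by
          gcongr
          exact (gaussianLikelihoodRatio_pos a t).le
      _ = Real.exp (-(t - a) ^ 2 / 4) ^ 2 := by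
          rw [gaussianLikelihoodRatio, ← Real.exp_neg, ← Real.exp_add, ← Real.exp_nat_mul]
          congr 1
          push_cast
          ring
  have tail_le : ∫ x in {x | gaussianLikelihoodRatio a t < gaussianLikelihoodRatio a x},
      gaussianLikelihoodRatio a x ∂(gaussianReal 0 1) ≤ Real.exp (-(t - a) ^ 2 / 4) := by
    refine (setIntegral_gaussianLikelihoodRatio_le hat
      (measurableSet_lt measurable_const (measurable_gaussianLikelihoodRatio a))
      fun x hx => ?_).trans (Real.exp_le_exp.2 (by linarith [sq_nonneg (t - a)]))
    have : a * t < a * x := by simpa [gaussianLikelihoodRatio] using hx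
    exact (lt_of_mul_lt_mul_left this ha).le
  linarith

theorem tendsto_integral_abs_sampleMean_gaussianLikelihoodRatio_sub_one {κ : Type*} {l : Filter κ}
    {p : κ → ℕ} {a : κ → ℝ} (ha : ∀ᶠ i in l, 0 ≤ a i)
    (hgap : Tendsto (fun i => √(2 * Real.log (p i)) - a i) l atTop) :
    Tendsto (fun i => ∫ ξ, |sampleMean (gaussianLikelihoodRatio (a i)) ξ - 1|
      ∂(Measure.pi fun _ : Fin (p i) => gaussianReal 0 1)) l (nhds 0) := by
  have bound_tendsto : Tendsto
      (fun i => 3 * Real.exp (-(√(2 * Real.log (p i)) - a i) ^ 2 / 4)) l (nhds 0) := by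
    have gap_sq : Tendsto (fun i => (√(2 * Real.log (p i)) - a i) ^ 2 / 4) l atTop :=
      ((tendsto_pow_atTop two_ne_zero).comp hgap).atTop_div_const (by norm_num)
    simpa [neg_div] using (Real.tendsto_exp_neg_atTop_nhds_zero.comp gap_sq).const_mul 3
  refine squeeze_zero' (Eventually.of_forall fun i => integral_nonneg fun _ => abs_nonneg _) ?_
    bound_tendsto
  filter_upwards [ha, hgap.eventually_gt_atTop 0] with i hai hgapi
  have log_pos : 0 < 2 * Real.log (p i) := Real.sqrt_pos.1 (hai.trans_lt (sub_pos.1 hgapi))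
  have p_pos : (0 : ℝ) < p i := by
    refine Nat.cast_pos.2 (Nat.pos_of_ne_zero fun hp => ?_)
    simp [hp] at log_pos
  refine integral_abs_sampleMean_gaussianLikelihoodRatio_sub_one_le hai (sub_pos.1 hgapi).le ?_
  rw [Real.sq_sqrt log_pos.le, mul_div_cancel_left₀ _ two_ne_zero, Real.exp_log p_pos,
    Fintype.card_fin]

end GaussianLikelihoodRatio

lemma sqrt_mul_mul_sqrt_div {n : ℝ} (hn : 0 < n) (c x : ℝ) : √n * (c * √(x / n)) = c * √x := by
  rw [Real.sqrt_div' _ hn.le]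
  field_simp

theorem statement8_general {p : ℕ → ℕ} {ε : ℕ → ℝ} (hε : ∀ᶠ n in atTop, ε n ≤ 1)
    (hεp : Tendsto (fun n => ε n * √(Real.log (p n))) atTop atTop) :
    Tendsto (fun n =>
        ∫ ξ, |(p n : ℝ)⁻¹ * ∑ j,
              Real.exp (√n * ((1 - ε n) * √(2 * Real.log (p n) / n)) * ξ j
                - n * ((1 - ε n) * √(2 * Real.log (p n) / n)) ^ 2 / 2) - 1|
          ∂(Measure.pi fun _ : Fin (p n) => gaussianReal 0 1))
      atTop (nhds 0) := by
  have shift_nonneg : ∀ᶠ n in atTop, 0 ≤ (1 - ε n) * √(2 * Real.log (p n)) :=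
    hε.mono fun n hn => mul_nonneg (sub_nonneg.2 hn) (Real.sqrt_nonneg _)
  have gap_tendsto : Tendsto
      (fun n => √(2 * Real.log (p n)) - (1 - ε n) * √(2 * Real.log (p n))) atTop atTop := by
    refine (hεp.const_mul_atTop (Real.sqrt_pos.2 two_pos)).congr fun n => ?_
    rw [Real.sqrt_mul zero_le_two]
    ring
  refine (tendsto_integral_abs_sampleMean_gaussianLikelihoodRatio_sub_one shift_nonneg
    gap_tendsto).congr' ?_
  filter_upwards [eventually_gt_atTop 0] with n n_pos
  have hn : (0 : ℝ) < n := Nat.cast_pos.2 n_pos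
  have shift_eq := sqrt_mul_mul_sqrt_div hn (1 - ε n) (2 * Real.log (p n))
  simp only [sampleMean, gaussianLikelihoodRatio, Fintype.card_fin, ← shift_eq,
    mul_pow (√(n : ℝ)), Real.sq_sqrt hn.le]

/-- Lemma 5.1, second part: if `p_n → ∞`, `ε_n > 0`, `ε_n → 0` and
`ε_n √(log p_n) → ∞`, then with `r̲_n = (1-ε_n)√(2 (log p_n)/n)`,
`E|p_n⁻¹ Σ_j exp(√n r̲_n ξ_j - n r̲_n²/2) - 1| → 0`, `ξ_j` i.i.d. standard normal. -/
theorem statement8 :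
    ∀ p : ℕ → ℕ, Tendsto (fun n => (p n : ℝ)) atTop atTop →
    ∀ ε : ℕ → ℝ, (∀ n, 0 < ε n) → Tendsto ε atTop (nhds 0) →
    Tendsto (fun n => ε n * Real.sqrt (Real.log (p n))) atTop atTop →
    Tendsto (fun n =>
        ∫ ξ, |(p n : ℝ)⁻¹ * ∑ j,
              Real.exp (Real.sqrt n * ((1 - ε n) * Real.sqrt (2 * Real.log (p n) / n)) * ξ j
                - n * ((1 - ε n) * Real.sqrt (2 * Real.log (p n) / n)) ^ 2 / 2) - 1|
          ∂(Measure.pi fun _ : Fin (p n) => gaussianReal 0 1))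
      atTop (nhds 0) := by
  intro p _ ε _ hε hεp
  exact statement8_general (hε.eventually_le_const one_pos) hεp

end ManyMoment
end
end

section
/- For every t ∈ ℝ and ε > 0, Pr(| max_{1≤j≤p} Y_j − t | ≤ ε) ≤ 4·ε·(√(2·log p) + 1). -/
/-!
Lemma A.4(ii): anti-concentration for the maximum of `p` standard Gaussian coordinates
with arbitrary correlation structure. The law `ν` of the Gaussian vector `(Y_1,…,Y_p)`
is characterized by: every linear functional of the vector is Gaussian, and every
coordinate is standard normal.
-/

open MeasureTheory ProbabilityTheory
open scoped ENNReal NNReal BigOperators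

noncomputable section

namespace ManyMoment

/-!
Let `γ` be the standard normal law, `φ` its density, and `M` the maximum. The law of `M` has a
density `G` with respect to `γ` that is *nondecreasing* and bounded by `p`. Indeed, split according
to the first index `j` at which the maximum is attained. Given `Y_j = x`, the vector is `V + x ρ`,
where `ρ_k = cov (Y_k, Y_j)` and the residual `V` is independent of `Y_j`. Since all variances are
`1`, `ρ_k ≤ 1 = ρ_j`: raising `x` lifts no coordinate more than the `j`-th, so the conditional
probability `g_j x` that `j` is the first maximizer is nondecreasing. Then `G = ∑ j, g_j`.

The Lebesgue density `φ * G` of `M` is bounded by `√(2 log p) + 1`. For `x ≥ √(2 log p)` this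
follows from `G ≤ p` and `φ x ≤ exp (-x² / 2) ≤ 1 / p`. For `x ≤ √(2 log p)`, monotonicity gives
`G x * γ [x, ∞) ≤ P (M ≥ x) ≤ 1`, and the hazard rate `φ x / γ [x, ∞)` is at most `max x 0 + 1`.
Integrating over `[t - ε, t + ε]` yields the claim, with the constant `2` in place of `4`.
-/

section StandardNormalDensity

lemma hasDerivAt_gaussianPDFReal (μ : ℝ) (v : ℝ≥0) (x : ℝ) :
    HasDerivAt (gaussianPDFReal μ v) (-((x - μ) / v) * gaussianPDFReal μ v x) x := by
  have hexponent : HasDerivAt (fun x => -(x - μ) ^ 2 / (2 * v)) (-((x - μ) / v)) x := by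
    refine ((((hasDerivAt_id x).sub_const μ).pow 2).neg.div_const (2 * (v : ℝ))).congr_deriv ?_
    simp only [id_eq]
    ring
  refine (hexponent.exp.const_mul (√(2 * Real.pi * v))⁻¹).congr_deriv ?_
  rw [gaussianPDFReal_def]
  ring

lemma gaussianPDFReal_le_gaussianPDFReal_mean (μ : ℝ) (v : ℝ≥0) (x : ℝ) :
    gaussianPDFReal μ v x ≤ gaussianPDFReal μ v μ := by
  have hexponent : -(x - μ) ^ 2 / (2 * v) ≤ -(μ - μ) ^ 2 / (2 * v) := by
    have : 0 ≤ (x - μ) ^ 2 := sq_nonneg _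
    exact div_le_div_of_nonneg_right (by simpa using this) (by positivity)
  simpa only [gaussianPDFReal_def] using
    mul_le_mul_of_nonneg_left (Real.exp_le_exp.2 hexponent) (by positivity)

lemma tendsto_gaussianPDFReal_div_add_one (μ : ℝ) (v : ℝ≥0) :
    Filter.Tendsto (fun s => gaussianPDFReal μ v s / (s + 1)) Filter.atTop (nhds 0) := by
  have hbound : Filter.Tendsto (fun s : ℝ => gaussianPDFReal μ v μ / (s + 1))
      Filter.atTop (nhds 0) :=
    (Filter.tendsto_atTop_add_const_right _ 1 Filter.tendsto_id).const_div_atTop _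
  refine tendsto_of_tendsto_of_tendsto_of_le_of_le' tendsto_const_nhds hbound ?_ ?_
  all_goals filter_upwards [Filter.eventually_ge_atTop 0] with s hs
  · exact div_nonneg (gaussianPDFReal_nonneg μ v s) (by linarith)
  · gcongr
    exact gaussianPDFReal_le_gaussianPDFReal_mean μ v s

/-- Compare `φ` with the derivative `φ s * (s² + s + 1) / (s + 1)²` of `-φ s / (s + 1)`. -/
lemma gaussianPDFReal_div_le_integral_Ioi {x : ℝ} (hx : 0 ≤ x) :
    gaussianPDFReal 0 1 x / (x + 1) ≤ ∫ s in Set.Ioi x, gaussianPDFReal 0 1 s := by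
  let f' : ℝ → ℝ := fun s => gaussianPDFReal 0 1 s * ((s ^ 2 + s + 1) / (s + 1) ^ 2)
  have hderiv : ∀ s ∈ Set.Ici x,
      HasDerivAt (fun s => -(gaussianPDFReal 0 1 s / (s + 1))) (f' s) s := by
    intro s hs
    have hs1 : s + 1 ≠ 0 := by have : x ≤ s := hs; linarith
    refine ((hasDerivAt_gaussianPDFReal 0 1 s).div
      ((hasDerivAt_id s).add_const 1) hs1).neg.congr_deriv ?_
    simp only [f', id_eq, NNReal.coe_one, sub_zero, div_one]
    field_simp
    ring
  have hnonneg : ∀ s ∈ Set.Ioi x, 0 ≤ f' s := by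
    intro s hs
    have hs0 : 0 ≤ s := hx.trans (le_of_lt hs)
    exact mul_nonneg (gaussianPDFReal_nonneg 0 1 s) (by positivity)
  have hlim : Filter.Tendsto (fun s => -(gaussianPDFReal 0 1 s / (s + 1)))
      Filter.atTop (nhds 0) := by
    simpa only [neg_zero] using (tendsto_gaussianPDFReal_div_add_one 0 1).neg
  calc gaussianPDFReal 0 1 x / (x + 1) = ∫ s in Set.Ioi x, f' s := by
        rw [integral_Ioi_of_hasDerivAt_of_nonneg' hderiv hnonneg hlim, zero_sub, neg_neg]
    _ ≤ ∫ s in Set.Ioi x, gaussianPDFReal 0 1 s := by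
        refine setIntegral_mono_on (integrableOn_Ioi_deriv_of_nonneg' hderiv hnonneg hlim)
          (integrable_gaussianPDFReal 0 1).integrableOn measurableSet_Ioi fun s hs => ?_
        have hs0 : 0 ≤ s := hx.trans (le_of_lt hs)
        refine mul_le_of_le_one_right (gaussianPDFReal_nonneg 0 1 s) ?_
        rw [div_le_one (by positivity)]
        nlinarith

lemma gaussianPDF_le_mul_gaussianReal_Ici (x : ℝ) :
    gaussianPDF 0 1 x ≤ ENNReal.ofReal (max x 0 + 1) * gaussianReal 0 1 (Set.Ici x) := by
  set z := max x 0
  have hz : 0 ≤ z := le_max_right x 0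
  have hpdf : gaussianPDFReal 0 1 x ≤ gaussianPDFReal 0 1 z := by
    rcases le_total 0 x with hx | hx
    · simp only [z, max_eq_left hx, le_refl]
    · simpa only [z, max_eq_right hx] using gaussianPDFReal_le_gaussianPDFReal_mean 0 1 x
  have hmills : gaussianPDFReal 0 1 z ≤ (z + 1) * ∫ s in Set.Ioi z, gaussianPDFReal 0 1 s :=
    (div_le_iff₀' (by positivity)).1 (gaussianPDFReal_div_le_integral_Ioi hz)
  calc gaussianPDF 0 1 x
      ≤ ENNReal.ofReal ((z + 1) * ∫ s in Set.Ioi z, gaussianPDFReal 0 1 s) :=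
        ENNReal.ofReal_le_ofReal (hpdf.trans hmills)
    _ = ENNReal.ofReal (z + 1) * gaussianReal 0 1 (Set.Ioi z) := by
        rw [ENNReal.ofReal_mul (by positivity), gaussianReal_apply_eq_integral 0 one_ne_zero]
    _ ≤ ENNReal.ofReal (z + 1) * gaussianReal 0 1 (Set.Ici x) := by
        gcongr
        exact Set.Ioi_subset_Ici (le_max_left x 0)

lemma gaussianPDFReal_le_inv_of_sqrt_two_mul_log_le {K x : ℝ} (hK : 0 < K)
    (hx : √(2 * Real.log K) ≤ x) : gaussianPDFReal 0 1 x ≤ K⁻¹ := by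
  have hlog : 2 * Real.log K ≤ x ^ 2 := (Real.sqrt_le_iff.1 hx).2
  have hone : (√(2 * Real.pi))⁻¹ ≤ 1 :=
    inv_le_one_of_one_le₀ (Real.one_le_sqrt.2 (by linarith [Real.pi_gt_three]))
  calc gaussianPDFReal 0 1 x = (√(2 * Real.pi))⁻¹ * Real.exp (-x ^ 2 / 2) := by
        simp [gaussianPDFReal_def]
    _ ≤ Real.exp (-x ^ 2 / 2) := mul_le_of_le_one_left (Real.exp_pos _).le hone
    _ ≤ Real.exp (-Real.log K) := Real.exp_le_exp.2 (by linarith)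
    _ = K⁻¹ := by rw [Real.exp_neg, Real.exp_log hK]

end StandardNormalDensity

section MonotoneDensity

variable {G : ℝ → ℝ≥0∞}

lemma gaussianPDF_mul_le_of_monotone (hG : Monotone G)
    (hmass : ∫⁻ x, G x ∂(gaussianReal 0 1) ≤ 1) (x : ℝ) :
    gaussianPDF 0 1 x * G x ≤ ENNReal.ofReal (max x 0 + 1) := by
  have hmarkov : gaussianReal 0 1 (Set.Ici x) * G x ≤ 1 :=
    calc gaussianReal 0 1 (Set.Ici x) * G x
        = ∫⁻ _ in Set.Ici x, G x ∂(gaussianReal 0 1) := by rw [setLIntegral_const, mul_comm]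
      _ ≤ ∫⁻ s in Set.Ici x, G s ∂(gaussianReal 0 1) :=
          setLIntegral_mono' measurableSet_Ici fun s hs => hG hs
      _ ≤ 1 := (setLIntegral_le_lintegral _ _).trans hmass
  calc gaussianPDF 0 1 x * G x
      ≤ ENNReal.ofReal (max x 0 + 1) * gaussianReal 0 1 (Set.Ici x) * G x := by
        gcongr
        exact gaussianPDF_le_mul_gaussianReal_Ici x
    _ ≤ ENNReal.ofReal (max x 0 + 1) := by
        rw [mul_assoc]
        exact mul_le_of_le_one_right' hmarkov

lemma gaussianPDF_mul_le_of_monotone_of_le {K : ℝ} (hK : 0 < K) (hG : Monotone G)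
    (hGK : ∀ x, G x ≤ ENNReal.ofReal K) (hmass : ∫⁻ x, G x ∂(gaussianReal 0 1) ≤ 1) (x : ℝ) :
    gaussianPDF 0 1 x * G x ≤ ENNReal.ofReal (√(2 * Real.log K) + 1) := by
  rcases le_total x √(2 * Real.log K) with hx | hx
  · refine (gaussianPDF_mul_le_of_monotone hG hmass x).trans (ENNReal.ofReal_le_ofReal ?_)
    gcongr
    exact max_le hx (Real.sqrt_nonneg _)
  · calc gaussianPDF 0 1 x * G x ≤ ENNReal.ofReal K⁻¹ * ENNReal.ofReal K :=
          mul_le_mul' (ENNReal.ofReal_le_ofReal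
            (gaussianPDFReal_le_inv_of_sqrt_two_mul_log_le hK hx)) (hGK x)
      _ = ENNReal.ofReal 1 := by
          rw [← ENNReal.ofReal_mul (by positivity), inv_mul_cancel₀ hK.ne']
      _ ≤ ENNReal.ofReal (√(2 * Real.log K) + 1) :=
          ENNReal.ofReal_le_ofReal (le_add_of_nonneg_left (Real.sqrt_nonneg _))

lemma gaussianReal_withDensity_le_smul_volume {K : ℝ} (hK : 0 < K) (hG : Monotone G)
    (hGK : ∀ x, G x ≤ ENNReal.ofReal K) (hmass : ∫⁻ x, G x ∂(gaussianReal 0 1) ≤ 1) :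
    (gaussianReal 0 1).withDensity G ≤ ENNReal.ofReal (√(2 * Real.log K) + 1) • volume := by
  rw [gaussianReal_of_var_ne_zero 0 one_ne_zero,
    ← withDensity_mul _ (measurable_gaussianPDF 0 1) hG.measurable, ← withDensity_const]
  exact withDensity_mono <| ae_of_all _ <| gaussianPDF_mul_le_of_monotone_of_le hK hG hGK hmass

end MonotoneDensity

section Independence

variable {Ω : Type*} {mΩ : MeasurableSpace Ω} {P : Measure Ω}

lemma map_restrict_preimage_prodMk_of_indepFun {α β : Type*} {mα : MeasurableSpace α}
    {mβ : MeasurableSpace β} [IsFiniteMeasure P] {X : Ω → α} {V : Ω → β} (hX : Measurable X)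
    (hV : Measurable V) (hXV : IndepFun X V P) {T : Set (α × β)} (hT : MeasurableSet T) :
    (P.restrict ((fun ω => (X ω, V ω)) ⁻¹' T)).map X =
      (P.map X).withDensity fun x => P.map V (Prod.mk x ⁻¹' T) := by
  ext B hB
  have hTB : MeasurableSet (T ∩ Prod.fst ⁻¹' B) := hT.inter (measurable_fst hB)
  have hslice : ∀ x, P.map V (Prod.mk x ⁻¹' (T ∩ Prod.fst ⁻¹' B)) =
      B.indicator (fun x => P.map V (Prod.mk x ⁻¹' T)) x := by
    intro x
    by_cases hx : x ∈ B <;> simp [Set.preimage_preimage, hx]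
  calc (P.restrict ((fun ω => (X ω, V ω)) ⁻¹' T)).map X B
      = P.map (fun ω => (X ω, V ω)) (T ∩ Prod.fst ⁻¹' B) := by
        rw [Measure.map_apply hX hB, Measure.restrict_apply (hX hB),
          Measure.map_apply (hX.prodMk hV) hTB, Set.inter_comm]
        rfl
    _ = ∫⁻ x, P.map V (Prod.mk x ⁻¹' (T ∩ Prod.fst ⁻¹' B)) ∂(P.map X) := by
        rw [(indepFun_iff_map_prod_eq_prod_map_map hX.aemeasurable hV.aemeasurable).1 hXV,
          Measure.prod_apply hTB]
    _ = (P.map X).withDensity (fun x => P.map V (Prod.mk x ⁻¹' T)) B := by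
        rw [withDensity_apply _ hB, ← lintegral_indicator hB]
        exact lintegral_congr hslice

lemma two_mul_covariance_le_variance_add_variance [IsFiniteMeasure P] {X Y : Ω → ℝ}
    (hX : MemLp X 2 P) (hY : MemLp Y 2 P) : 2 * cov[X, Y; P] ≤ Var[X; P] + Var[Y; P] := by
  linarith [variance_sub hX hY, variance_nonneg (X - Y) P]

lemma indepFun_regression_residual {ι : Type*} [Finite ι] {Y : ι → Ω → ℝ}
    (hY : HasGaussianLaw (fun ω k => Y k ω) P) {j : ι} {ρ : ι → ℝ}
    (hρ : ∀ k, ρ k * Var[Y j; P] = cov[Y k, Y j; P]) :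
    IndepFun (Y j) (fun ω k => Y k ω - ρ k * Y j ω) P := by
  have := Fintype.ofFinite ι
  have := hY.isProbabilityMeasure
  have hL2 : ∀ k, MemLp (Y k) 2 P := fun k => (hY.eval k).memLp_two
  let L : (ι → ℝ) →L[ℝ] (Unit → ℝ) × (ι → ℝ) :=
    (ContinuousLinearMap.pi fun _ => ContinuousLinearMap.proj j).prod
      (ContinuousLinearMap.pi fun k =>
        ContinuousLinearMap.proj k - ρ k • ContinuousLinearMap.proj j)
  have hjoint : HasGaussianLaw
      (fun ω => ((fun _ : Unit => Y j ω), fun k => Y k ω - ρ k * Y j ω)) P := hY.map_fun L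
  have huncorr : ∀ k, cov[Y j, fun ω => Y k ω - ρ k * Y j ω; P] = 0 := by
    intro k
    rw [covariance_fun_sub_right (hL2 j) (hL2 k) ((hL2 j).const_mul _),
      covariance_const_mul_right, covariance_self (hL2 j).aemeasurable, hρ, covariance_comm,
      sub_self]
  exact (hjoint.indepFun_of_covariance_eval (X := fun _ => Y j) fun _ => huncorr).comp
    (measurable_pi_apply ()) measurable_id

end Independence

section FirstArgmax

variable {ι : Type*} [LinearOrder ι]

/-- The vectors whose maximum is attained at the `j`-th coordinate and at no earlier one. Taking the
first maximizer makes these sets disjoint even when coordinates coincide almost surely. -/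
def firstArgmax (j : ι) : Set (ι → ℝ) :=
  {y | ∀ k, y k ≤ y j ∧ (k < j → y k < y j)}

lemma pairwise_disjoint_firstArgmax :
    Pairwise (Function.onFun Disjoint (firstArgmax (ι := ι))) := by
  intro i j hij
  refine Set.disjoint_left.2 fun y hi hj => ?_
  rcases hij.lt_or_gt with h | h
  · exact ((hj i).2 h).not_ge (hi j).1
  · exact ((hi j).2 h).not_ge (hj i).1

lemma iUnion_firstArgmax [Finite ι] [Nonempty ι] :
    ⋃ j, firstArgmax j = (Set.univ : Set (ι → ℝ)) := by
  refine Set.eq_univ_of_forall fun y => Set.mem_iUnion.2 ?_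
  obtain ⟨j, hmax, hfirst⟩ :=
    exists_minimal_of_wellFoundedLT (fun j => ∀ k, y k ≤ y j) (Finite.exists_max y)
  refine ⟨j, fun k => ⟨hmax k, fun hkj => lt_of_not_ge fun hjk => ?_⟩⟩
  exact hkj.not_ge (hfirst (fun l => (hmax l).trans hjk) hkj.le)

lemma iSup_eq_of_mem_firstArgmax {j : ι} {y : ι → ℝ} (hy : y ∈ firstArgmax j) :
    ⨆ k, y k = y j :=
  IsGreatest.csSup_eq ⟨Set.mem_range_self j, Set.forall_mem_range.2 fun k => (hy k).1⟩

lemma measurableSet_firstArgmax [Countable ι] (j : ι) : MeasurableSet (firstArgmax j) := by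
  simp only [firstArgmax, Set.ofPred_forall, Set.ofPred_and]
  measurability

lemma add_smul_mem_firstArgmax_of_le {j : ι} {v ρ : ι → ℝ} (hρ : ∀ k, ρ k ≤ ρ j) {x x' : ℝ}
    (hx : x ≤ x') (hmem : v + x • ρ ∈ firstArgmax j) : v + x' • ρ ∈ firstArgmax j := by
  intro k
  have hgrow : (x' - x) * ρ k ≤ (x' - x) * ρ j :=
    mul_le_mul_of_nonneg_left (hρ k) (sub_nonneg.2 hx)
  have hk := hmem k
  simp only [Pi.add_apply, Pi.smul_apply, smul_eq_mul] at hk ⊢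
  exact ⟨by linarith [hk.1], fun hkj => by linarith [hk.2 hkj]⟩

lemma map_iSup_eq_sum_map_restrict_firstArgmax [Finite ι] [Nonempty ι] (ν : Measure (ι → ℝ)) :
    ν.map (fun y => ⨆ k, y k) =
      Measure.sum fun j => (ν.restrict (firstArgmax j)).map fun y => y j := by
  have hsup : Measurable fun y : ι → ℝ => ⨆ k, y k := Measurable.iSup measurable_pi_apply
  have hsplit : ν = Measure.sum fun j => ν.restrict (firstArgmax j) := by
    rw [← Measure.restrict_iUnion pairwise_disjoint_firstArgmax measurableSet_firstArgmax,
      iUnion_firstArgmax, Measure.restrict_univ]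
  conv_lhs => rw [hsplit, Measure.map_sum hsup.aemeasurable]
  congr with j : 1
  exact Measure.map_congr <| (ae_restrict_iff' (measurableSet_firstArgmax j)).2 <|
    ae_of_all _ fun _ => iSup_eq_of_mem_firstArgmax

/-- Regress on the `j`-th coordinate: given `Y_j = x`, the vector is `V + x • ρ`, where the residual
`V` is independent of `Y_j` and `ρ j` is the largest entry of `ρ`. -/
lemma exists_monotone_density_map_restrict_firstArgmax [Finite ι] {ν : Measure (ι → ℝ)}
    [IsGaussian ν] {j : ι} {ρ : ι → ℝ}
    (hρ : ∀ k, ρ k * Var[fun y => y j; ν] = cov[fun y => y k, fun y => y j; ν])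
    (hρj : ∀ k, ρ k ≤ ρ j) :
    ∃ g : ℝ → ℝ≥0∞, Monotone g ∧ (∀ x, g x ≤ 1) ∧
      (ν.restrict (firstArgmax j)).map (fun y => y j) =
        (ν.map fun y => y j).withDensity g := by
  have hid : HasGaussianLaw (fun (y : ι → ℝ) k => y k) ν := IsGaussian.hasGaussianLaw_id
  let V : (ι → ℝ) → ι → ℝ := fun y k => y k - ρ k * y j
  have hV : Measurable V := by fun_prop
  have : IsProbabilityMeasure (ν.map V) := Measure.isProbabilityMeasure_map hV.aemeasurable
  let T : Set (ℝ × (ι → ℝ)) := {z | z.2 + z.1 • ρ ∈ firstArgmax j}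
  have hT : MeasurableSet T := (by fun_prop : Measurable fun z : ℝ × (ι → ℝ) => z.2 + z.1 • ρ)
    (measurableSet_firstArgmax j)
  have hpreimage : (fun y => (y j, V y)) ⁻¹' T = firstArgmax j := by
    ext y
    have hrec : V y + y j • ρ = y := by ext k; simp [V, mul_comm]
    simp [T, hrec]
  have hindep : IndepFun (fun y : ι → ℝ => y j) V ν :=
    indepFun_regression_residual hid hρ
  refine ⟨fun x => ν.map V (Prod.mk x ⁻¹' T), fun x x' hx => ?_, fun x => prob_le_one, ?_⟩
  · exact measure_mono fun v hv => add_smul_mem_firstArgmax_of_le hρj hx hv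
  · rw [← hpreimage]
    exact map_restrict_preimage_prodMk_of_indepFun (measurable_pi_apply j) hV hindep hT

end FirstArgmax

section MaximumLaw

variable {ι : Type*} [Fintype ι]

lemma exists_monotone_density_map_iSup [LinearOrder ι] [Nonempty ι] {ν : Measure (ι → ℝ)}
    [IsGaussian ν] (hstd : ∀ j, ν.map (fun y => y j) = gaussianReal 0 1) :
    ∃ G : ℝ → ℝ≥0∞, Monotone G ∧ (∀ x, G x ≤ Fintype.card ι) ∧
      ν.map (fun y => ⨆ k, y k) = (gaussianReal 0 1).withDensity G := by
  have hid : HasGaussianLaw (fun (y : ι → ℝ) k => y k) ν := IsGaussian.hasGaussianLaw_id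
  have hL2 : ∀ k, MemLp (fun y : ι → ℝ => y k) 2 ν := fun k => (hid.eval k).memLp_two
  have hvar : ∀ k, Var[fun y : ι → ℝ => y k; ν] = 1 := by
    intro k
    have hlaw : HasLaw (fun y : ι → ℝ => y k) (gaussianReal 0 1) ν :=
      ⟨(measurable_pi_apply k).aemeasurable, hstd k⟩
    rw [hlaw.variance_eq, variance_id_gaussianReal, NNReal.coe_one]
  have hcov : ∀ j k, cov[fun y : ι → ℝ => y k, fun y => y j; ν] ≤
      cov[fun y => y j, fun y => y j; ν] := by
    intro j k
    rw [covariance_self (hL2 j).aemeasurable, hvar]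
    linarith [two_mul_covariance_le_variance_add_variance (hL2 k) (hL2 j), hvar k, hvar j]
  choose g hmono hle hdensity using fun j =>
    exists_monotone_density_map_restrict_firstArgmax (fun k => by rw [hvar j, mul_one]) (hcov j)
  refine ⟨∑' j, g j, ?_, fun x => ?_, ?_⟩
  · rw [tsum_fintype]
    intro x x' hx
    simp only [Finset.sum_apply]
    exact Finset.sum_le_sum fun j _ => hmono j hx
  · rw [tsum_fintype, Finset.sum_apply]
    exact (Finset.sum_le_sum fun j _ => hle j x).trans (by simp)
  · rw [map_iSup_eq_sum_map_restrict_firstArgmax, withDensity_tsum fun j => (hmono j).measurable]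
    simp only [hdensity, hstd]

theorem map_iSup_le_smul_volume [Nonempty ι] {ν : Measure (ι → ℝ)} [IsGaussian ν]
    (hstd : ∀ j, ν.map (fun y => y j) = gaussianReal 0 1) :
    ν.map (fun y => ⨆ k, y k) ≤
      ENNReal.ofReal (√(2 * Real.log (Fintype.card ι)) + 1) • volume := by
  let : LinearOrder ι := LinearOrder.lift' (Fintype.equivFin ι) (Fintype.equivFin ι).injective
  obtain ⟨G, hG, hGcard, hlaw⟩ := exists_monotone_density_map_iSup hstd
  have : IsProbabilityMeasure (ν.map fun y => ⨆ k, y k) :=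
    Measure.isProbabilityMeasure_map (Measurable.iSup measurable_pi_apply).aemeasurable
  have hmass : ∫⁻ x, G x ∂(gaussianReal 0 1) = 1 := by
    rw [← setLIntegral_univ, ← withDensity_apply G .univ, ← hlaw, measure_univ]
  rw [hlaw]
  exact gaussianReal_withDensity_le_smul_volume (by exact_mod_cast Fintype.card_pos) hG
    (by simpa only [ENNReal.ofReal_natCast] using hGcard) hmass.le

lemma isGaussian_of_forall_map_sum_mul {ν : Measure (ι → ℝ)}
    (h : ∀ a : ι → ℝ, ∃ m v, ν.map (fun y => ∑ j, a j * y j) = gaussianReal m v) :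
    IsGaussian ν := by
  classical
  refine isGaussian_of_map_eq_gaussianReal fun L => ?_
  have hL : ⇑L = fun y => ∑ j, L (Pi.single j 1) * y j := by
    ext y
    conv_lhs => rw [pi_eq_sum_univ' y]
    simp [map_sum, mul_comm]
  rw [hL]
  exact h _

end MaximumLaw

theorem statement15_general {ι Ω : Type*} [Fintype ι] [Nonempty ι] {mΩ : MeasurableSpace Ω}
    {P : Measure Ω} {Y : ι → Ω → ℝ} (hY : HasGaussianLaw (fun ω i => Y i ω) P)
    (hstd : ∀ i, P.map (Y i) = gaussianReal 0 1) (t : ℝ) {ε : ℝ} (hε : 0 ≤ ε) :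
    P.real {ω | |(⨆ i, Y i ω) - t| ≤ ε} ≤
      2 * ε * (√(2 * Real.log (Fintype.card ι)) + 1) := by
  have hsup : Measurable fun y : ι → ℝ => ⨆ i, y i := Measurable.iSup measurable_pi_apply
  have := hY.isGaussian_map
  have hstd' : ∀ i, (P.map fun ω i => Y i ω).map (fun y => y i) = gaussianReal 0 1 := fun i => by
    rw [AEMeasurable.map_map_of_aemeasurable (measurable_pi_apply i).aemeasurable hY.aemeasurable]
    exact hstd i
  refine ENNReal.toReal_le_of_le_ofReal (by positivity) ?_
  calc P {ω | |(⨆ i, Y i ω) - t| ≤ ε}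
      = ((P.map fun ω i => Y i ω).map fun y => ⨆ i, y i) (Metric.closedBall t ε) := by
        rw [AEMeasurable.map_map_of_aemeasurable hsup.aemeasurable hY.aemeasurable,
          Measure.map_apply_of_aemeasurable (hsup.comp_aemeasurable hY.aemeasurable)
            measurableSet_closedBall]
        rfl
    _ ≤ ENNReal.ofReal (√(2 * Real.log (Fintype.card ι)) + 1) * volume (Metric.closedBall t ε) :=
        map_iSup_le_smul_volume hstd' _
    _ = ENNReal.ofReal (2 * ε * (√(2 * Real.log (Fintype.card ι)) + 1)) := by
        rw [Real.volume_closedBall, mul_comm, ← ENNReal.ofReal_mul (by positivity)]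

/-- if `(Y_1,…,Y_p)` is a Gaussian vector with `E Y_j = 0`, `E Y_j² = 1`
(arbitrary correlation), then for every `t ∈ ℝ` and `ε > 0`,
`Pr(|max_j Y_j - t| ≤ ε) ≤ 4 ε (√(2 log p) + 1)`. -/
theorem statement15 :
    ∀ (p : ℕ), 2 ≤ p →
    ∀ ν : Measure (Fin p → ℝ), IsProbabilityMeasure ν →
    (∀ a : Fin p → ℝ, ∃ v : ℝ≥0,
      Measure.map (fun y => ∑ j, a j * y j) ν = gaussianReal 0 v) →
    (∀ j, Measure.map (fun y => y j) ν = gaussianReal 0 1) →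
    ∀ t ε : ℝ, 0 < ε →
    (ν {y | |(⨆ j, y j) - t| ≤ ε}).toReal ≤ 4 * ε * (Real.sqrt (2 * Real.log p) + 1) := by
  intro p hp ν _ hlin hstd t ε hε
  have : NeZero p := ⟨by omega⟩
  have : IsGaussian ν := isGaussian_of_forall_map_sum_mul fun a => ⟨0, hlin a⟩
  refine (statement15_general (Y := fun j y => y j) (P := ν) IsGaussian.hasGaussianLaw_id hstd t
    hε.le).trans ?_
  rw [Fintype.card_fin]
  gcongr
  norm_num

end ManyMoment
end
end
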